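/- Let σ = {rg, gr, bg, gb, rb, br} be a six-letter alphabet, whose letters we write as ordered pairs αβ of distinct colors from {r, g, b}. Let V = {V₁, V₂} be the RPQ view with L(V₁) = σ (the six one-letter words) and L(V₂) = {α₁β₁·α₂β₂ : β₁ ≠ α₂} (two-letter words whose middle colors mismatch). Let G = (U, W) be a finite connected undirected graph. Then G is 3-colorable if and only if there exists a finite graph database D over σ whose node set contains U, such that V₁(D) = {(x,y) : {x,y} ∈ W} and V₂(D) = ∅. -/

import Mathlib

/-!
A proper colouring `c` gives the database on `U` in which each pair `W x y` carries exactly the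
letter `(c x, c y)`; consecutive letters then agree on the middle colour.

Conversely, suppose no two consecutive letters mismatch. Since `W` is symmetric, a node `x` with an
outgoing edge also has an incoming one, and the second colour of that incoming letter equals the
first colour of every letter leaving `x`. So the first colour of the letters leaving `x` depends
only on `x`; it is the colour of `x`. If `a` labels an edge from `x` to `y`, then `x` gets the first
colour of `a` and `y` gets the second, and these differ. Nodes without edges may be coloured
arbitrarily.
-/

/-- A graph database over alphabet `σ`: a finite set of nodes (drawn from `ℕ`)
together with a binary edge relation for each letter of `σ`. -/
structure GDB (σ : Type) where
  nodes : Finset ℕ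
  edge : σ → ℕ → ℕ → Prop
  edge_mem : ∀ a x y, edge a x y → x ∈ nodes ∧ y ∈ nodes

/-- `D.HasPath x w y`: there is a path from `x` to `y` in `D` whose label is `w`. -/
inductive GDB.HasPath {σ : Type} (D : GDB σ) : ℕ → List σ → ℕ → Prop
  | nil {x : ℕ} : x ∈ D.nodes → GDB.HasPath D x [] x
  | cons {x y z : ℕ} {a : σ} {w : List σ} :
      D.edge a x y → GDB.HasPath D y w z → GDB.HasPath D x (a :: w) z

/-- The path query defined by a language `L`: pairs of nodes connected by a
path whose label belongs to `L`. -/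
def pathQuery {σ : Type} (L : Set (List σ)) (D : GDB σ) (x y : ℕ) : Prop :=
  ∃ w ∈ L, D.HasPath x w y

/-- The three colors. -/
inductive Color | r | g | b
deriving DecidableEq

/-- The six-letter alphabet of ordered pairs of distinct colors. -/
abbrev Sigma6 := {p : Color × Color // p.1 ≠ p.2}

/-- `L(V₁)`: the six one-letter words. -/
def oneLetterLang : Set (List Sigma6) := {w | ∃ a : Sigma6, w = [a]}

/-- `L(V₂)`: two-letter words `α₁β₁·α₂β₂` with `β₁ ≠ α₂`. -/
def mismatchLang : Set (List Sigma6) :=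
  {w | ∃ a₁ a₂ : Sigma6, w = [a₁, a₂] ∧ a₁.1.2 ≠ a₂.1.1}

theorem GDB.hasPath_singleton {σ : Type} (D : GDB σ) (x y : ℕ) (a : σ) :
    D.HasPath x [a] y ↔ D.edge a x y := by
  constructor
  · rintro (_ | ⟨h, h'⟩)
    cases h'
    exact h
  · exact fun h => .cons h (.nil (D.edge_mem _ _ _ h).2)

theorem GDB.hasPath_pair {σ : Type} (D : GDB σ) (x y : ℕ) (a b : σ) :
    D.HasPath x [a, b] y ↔ ∃ z, D.edge a x z ∧ D.edge b z y := by
  constructor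
  · rintro (_ | ⟨h, h'⟩)
    exact ⟨_, h, (D.hasPath_singleton _ _ _).1 h'⟩
  · rintro ⟨z, h, h'⟩
    exact .cons h ((D.hasPath_singleton _ _ _).2 h')

theorem pathQuery_oneLetterLang (D : GDB Sigma6) (x y : ℕ) :
    pathQuery oneLetterLang D x y ↔ ∃ a, D.edge a x y := by
  constructor
  · rintro ⟨_, ⟨a, rfl⟩, h⟩
    exact ⟨a, (D.hasPath_singleton _ _ _).1 h⟩
  · rintro ⟨a, h⟩
    exact ⟨_, ⟨a, rfl⟩, (D.hasPath_singleton _ _ _).2 h⟩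

theorem pathQuery_mismatchLang (D : GDB Sigma6) (x y : ℕ) :
    pathQuery mismatchLang D x y ↔
      ∃ a b z, D.edge a x z ∧ D.edge b z y ∧ a.1.2 ≠ b.1.1 := by
  constructor
  · rintro ⟨_, ⟨a, b, rfl, hab⟩, h⟩
    obtain ⟨z, h₁, h₂⟩ := (D.hasPath_pair _ _ _ _).1 h
    exact ⟨a, b, z, h₁, h₂, hab⟩
  · rintro ⟨a, b, z, h₁, h₂, hab⟩
    exact ⟨_, ⟨a, b, rfl, hab⟩, (D.hasPath_pair _ _ _ _).2 ⟨z, h₁, h₂⟩⟩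

/-- a finite connected undirected graph `G = (U, W)` is 3-colorable
iff there is a graph database `D` over `Sigma6` with `V₁(D) = W` and `V₂(D) = ∅`. -/
theorem stmt4 (U : Finset ℕ) (W : ℕ → ℕ → Prop)
    (hsymm : ∀ x y, W x y → W y x)
    (hmem : ∀ x y, W x y → x ∈ U ∧ y ∈ U)
    (hirr : ∀ x, ¬ W x x)
    (hconn : ∀ x ∈ U, ∀ y ∈ U, Relation.ReflTransGen W x y) :
    (∃ c : ℕ → Color, ∀ x y, W x y → c x ≠ c y)
    ↔ (∃ D : GDB Sigma6, U ⊆ D.nodes ∧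
        (∀ x y, pathQuery oneLetterLang D x y ↔ W x y) ∧
        (∀ x y, ¬ pathQuery mismatchLang D x y)) := by
  simp only [pathQuery_oneLetterLang, pathQuery_mismatchLang]
  constructor
  · rintro ⟨c, hc⟩
    refine ⟨⟨U, fun a x y => W x y ∧ a.1 = (c x, c y), fun _ x y h => hmem x y h.1⟩,
      subset_rfl, fun x y => ⟨fun ⟨_, h⟩ => h.1, fun h => ⟨⟨(c x, c y), hc x y h⟩, h, rfl⟩⟩, ?_⟩
    rintro x y ⟨a, b, z, ⟨-, ha⟩, ⟨-, hb⟩, hab⟩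
    exact hab (by rw [ha, hb])
  · rintro ⟨D, -, hW, hV⟩
    have hmatch : ∀ {x y z a b}, D.edge a x y → D.edge b y z → a.1.2 = b.1.1 :=
      fun {x y z a b} h₁ h₂ => by_contra fun h => hV x z ⟨a, b, y, h₁, h₂, h⟩
    have hrev : ∀ {x y a}, D.edge a x y → ∃ b, D.edge b y x :=
      fun {x y a} h => (hW y x).2 (hsymm x y ((hW x y).1 ⟨a, h⟩))
    have hcol : ∀ x, ∃ k : Color, ∀ a y, D.edge a x y → a.1.1 = k := by
      intro x
      by_cases hx : ∃ a y, D.edge a x y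
      · obtain ⟨a, y, h⟩ := hx
        obtain ⟨b, hb⟩ := hrev h
        exact ⟨b.1.2, fun a' y' h' => (hmatch hb h').symm⟩
      · exact ⟨.r, fun a y h => (hx ⟨a, y, h⟩).elim⟩
    choose c hc using hcol
    refine ⟨c, fun x y hxy => ?_⟩
    obtain ⟨a, ha⟩ := (hW x y).2 hxy
    obtain ⟨b, hb⟩ := hrev ha
    rw [← hc x a y ha, ← hc y b x hb, ← hmatch ha hb]
    exact a.2
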